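/- arXiv:1201.3089 — 2 statements merged into one kernel-verified Lean document; each statement's English description precedes it below -/
import Mathlib

section
/- Let σ > 0, R ≥ 0, and let C > 1 satisfy C = (3/(8π²))·∑_{k ∈ ℤ², |k| ≤ R} σ²/(C − 1 + |k|²). If C ≥ 2, then C ≤ (3/(8π²))·∑_{k ∈ ℤ², |k| ≤ R} σ²/(1 + |k|²). Consequently, if σ : (0,1) → (0,∞) is bounded and C_ε denotes this solution with R = 1/ε, there exist a constant K > 0 and ε₀ ∈ (0,1) such that C_ε ≥ 2 implies C_ε ≤ K·σ(ε)²·log(1/ε) for all ε ∈ (0, ε₀). -/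
/-!
The first part is monotonicity of `a ↦ S(a, R) = latticeSum a R`: since `C - 1 ≥ 1`, replacing
`C - 1` by `1` does not decrease any summand of the finite lattice sum.

For the second part it remains to bound `S(1, R)` by a multiple of `log R`
(`latticeSum_one_le`). The lattice points of the disc lie in the union of the sup-norm
spheres `box n`, `n ≤ ⌊R⌋₊`. The sphere of radius `n ≥ 1` has `8 n` points, each contributing at
most `1 / (1 + n²)`, so that `S(1, R) ≤ 1 + 8 H_N` with `N = ⌊R⌋₊` and `H_N` the harmonic number.
-/

open Real Filter Set MeasureTheory

/-- The lattice sum `S(a,R) = ∑_{k ∈ ℤ², |k| ≤ R} 1/(a + |k|²)`, where `|k|` is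
the Euclidean norm of the integer lattice point `k = (k₁, k₂)`. -/
noncomputable def latticeSum (a R : ℝ) : ℝ :=
  ∑' k : ℤ × ℤ,
    if (k.1 : ℝ) ^ 2 + (k.2 : ℝ) ^ 2 ≤ R ^ 2 then
      1 / (a + ((k.1 : ℝ) ^ 2 + (k.2 : ℝ) ^ 2))
    else 0

/-- The sup-norm ball of radius `N` in `ℤ²`, as the union of the spheres `box n`. -/
noncomputable def supBall (N : ℕ) : Finset (ℤ × ℤ) :=
  (Finset.range (N + 1)).biUnion fun n => Finset.box n

lemma mem_supBall {N : ℕ} {k : ℤ × ℤ} :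
    k ∈ supBall N ↔ max k.1.natAbs k.2.natAbs ≤ N := by
  simp [supBall, Int.mem_box]

lemma natAbs_le_floor_of_sq_le {R : ℝ} (hR : 0 ≤ R) {m : ℤ} (h : (m : ℝ) ^ 2 ≤ R ^ 2) :
    m.natAbs ≤ ⌊R⌋₊ := by
  apply Nat.le_floor
  rw [Nat.cast_natAbs, Int.cast_abs]
  exact abs_le_of_sq_le_sq h hR

lemma mem_supBall_of_le {R : ℝ} (hR : 0 ≤ R) {k : ℤ × ℤ}
    (h : (k.1 : ℝ) ^ 2 + (k.2 : ℝ) ^ 2 ≤ R ^ 2) : k ∈ supBall ⌊R⌋₊ := by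
  rw [mem_supBall]
  exact max_le (natAbs_le_floor_of_sq_le hR (by nlinarith [sq_nonneg (k.2 : ℝ)]))
    (natAbs_le_floor_of_sq_le hR (by nlinarith [sq_nonneg (k.1 : ℝ)]))

lemma latticeSum_eq_sum (a : ℝ) {R : ℝ} (hR : 0 ≤ R) :
    latticeSum a R = ∑ k ∈ supBall ⌊R⌋₊,
      if (k.1 : ℝ) ^ 2 + (k.2 : ℝ) ^ 2 ≤ R ^ 2 then
        1 / (a + ((k.1 : ℝ) ^ 2 + (k.2 : ℝ) ^ 2))
      else 0 := by
  refine tsum_eq_sum fun k hk => if_neg fun h => hk (mem_supBall_of_le hR h)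

lemma latticeSum_anti {a b R : ℝ} (hR : 0 ≤ R) (ha : 0 < a) (hab : a ≤ b) :
    latticeSum b R ≤ latticeSum a R := by
  rw [latticeSum_eq_sum a hR, latticeSum_eq_sum b hR]
  refine Finset.sum_le_sum fun k _ => ?_
  split_ifs
  · apply one_div_le_one_div_of_le <;> nlinarith [sq_nonneg (k.1 : ℝ), sq_nonneg (k.2 : ℝ)]
  · exact le_rfl

lemma sq_le_of_mem_box {n : ℕ} {k : ℤ × ℤ} (hk : k ∈ (Finset.box n : Finset (ℤ × ℤ))) :
    (n : ℝ) ^ 2 ≤ (k.1 : ℝ) ^ 2 + (k.2 : ℝ) ^ 2 := by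
  rw [Int.mem_box] at hk
  have e (m : ℤ) : ((m.natAbs : ℕ) : ℝ) ^ 2 = (m : ℝ) ^ 2 := by
    rw [Nat.cast_natAbs, Int.cast_abs, sq_abs]
  rcases max_choice k.1.natAbs k.2.natAbs with h | h <;> rw [← hk, h, e] <;>
    nlinarith [sq_nonneg (k.1 : ℝ), sq_nonneg (k.2 : ℝ)]

lemma sum_box_succ_le (n : ℕ) :
    ∑ k ∈ (Finset.box (n + 1) : Finset (ℤ × ℤ)),
      1 / (1 + ((k.1 : ℝ) ^ 2 + (k.2 : ℝ) ^ 2)) ≤ 8 * ((n : ℝ) + 1)⁻¹ := by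
  have hn : (0 : ℝ) < (n : ℝ) + 1 := by positivity
  calc _ ≤ (Finset.box (n + 1) : Finset (ℤ × ℤ)).card • (1 / ((n : ℝ) + 1) ^ 2) := by
        refine Finset.sum_le_card_nsmul _ _ _ fun k hk => ?_
        have h := sq_le_of_mem_box hk
        push_cast at h
        exact one_div_le_one_div_of_le (by positivity) (by linarith)
    _ = 8 * ((n : ℝ) + 1)⁻¹ := by
        rw [Int.card_box n.succ_ne_zero, nsmul_eq_mul]
        push_cast
        field_simp

/-- The logarithmic growth of the lattice sum, from summing over sup-norm spheres. -/
lemma latticeSum_one_le {R : ℝ} (hR : 1 ≤ R) : latticeSum 1 R ≤ 9 + 8 * Real.log R := by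
  have hR0 : 0 ≤ R := by linarith
  have hN : (1 : ℝ) ≤ (⌊R⌋₊ : ℕ) := by exact_mod_cast (Nat.one_le_floor_iff R).2 hR
  have hlog : Real.log (⌊R⌋₊ : ℕ) ≤ Real.log R :=
    Real.log_le_log (by linarith) (Nat.floor_le hR0)
  have hharm : ∑ n ∈ Finset.range ⌊R⌋₊, ((n : ℝ) + 1)⁻¹ ≤ 1 + Real.log (⌊R⌋₊ : ℕ) := by
    have h := harmonic_le_one_add_log ⌊R⌋₊
    rw [harmonic] at h
    push_cast at h
    exact h
  calc latticeSum 1 R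
      ≤ ∑ k ∈ supBall ⌊R⌋₊, 1 / (1 + ((k.1 : ℝ) ^ 2 + (k.2 : ℝ) ^ 2)) := by
        rw [latticeSum_eq_sum 1 hR0]
        refine Finset.sum_le_sum fun k _ => ?_
        split_ifs
        · exact le_rfl
        · positivity
    _ = ∑ n ∈ Finset.range (⌊R⌋₊ + 1), ∑ k ∈ (Finset.box n : Finset (ℤ × ℤ)),
          1 / (1 + ((k.1 : ℝ) ^ 2 + (k.2 : ℝ) ^ 2)) := by
        refine Finset.sum_biUnion fun m _ n _ hmn => Finset.disjoint_left.2 fun k hm hn => hmn ?_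
        rw [Int.mem_box] at hm hn
        exact hm.symm.trans hn
    _ ≤ ∑ n ∈ Finset.range ⌊R⌋₊, 8 * ((n : ℝ) + 1)⁻¹ + 1 := by
        rw [Finset.sum_range_succ']
        refine add_le_add (Finset.sum_le_sum fun n _ => sum_box_succ_le n) ?_
        simp
    _ ≤ 9 + 8 * Real.log R := by
        rw [← Finset.mul_sum]
        linarith

lemma le_of_fixedPoint {σ R c : ℝ} (hR : 0 ≤ R)
    (h : c = 3 / (8 * π ^ 2) * (σ ^ 2 * latticeSum (c - 1) R)) (hc : 2 ≤ c) :
    c ≤ 3 / (8 * π ^ 2) * (σ ^ 2 * latticeSum 1 R) := by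
  refine h.le.trans ?_
  gcongr
  exact latticeSum_anti hR one_pos (by linarith)

/-- First part: if `σ > 0`, `R ≥ 0` and `C > 1` satisfies
`C = (3/(8π²))·∑_{|k| ≤ R} σ²/(C − 1 + |k|²)` and `C ≥ 2`, then
`C ≤ (3/(8π²))·∑_{|k| ≤ R} σ²/(1 + |k|²)`.
Second part: consequently, if `σ : (0,1) → (0,∞)` is bounded and `C ε` denotes this
solution with `R = 1/ε`, there exist `K > 0` and `ε₀ ∈ (0,1)` such that for every
`ε ∈ (0, ε₀)`, `C ε ≥ 2` implies `C ε ≤ K·σ(ε)²·log(1/ε)`. -/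
theorem stmt10 :
    (∀ σ R Cv : ℝ, 0 < σ → 0 ≤ R → 1 < Cv →
      Cv = 3 / (8 * π ^ 2) * (σ ^ 2 * latticeSum (Cv - 1) R) → 2 ≤ Cv →
      Cv ≤ 3 / (8 * π ^ 2) * (σ ^ 2 * latticeSum 1 R)) ∧
    (∀ σ C : ℝ → ℝ,
      (∀ ε ∈ Set.Ioo (0 : ℝ) 1, 0 < σ ε) →
      (∃ M : ℝ, ∀ ε ∈ Set.Ioo (0 : ℝ) 1, σ ε ≤ M) →
      (∀ ε ∈ Set.Ioo (0 : ℝ) 1, 1 < C ε ∧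
        C ε = 3 / (8 * π ^ 2) * (σ ε ^ 2 * latticeSum (C ε - 1) (1 / ε))) →
      ∃ K > (0 : ℝ), ∃ ε₀ ∈ Set.Ioo (0 : ℝ) 1, ∀ ε ∈ Set.Ioo (0 : ℝ) ε₀,
        2 ≤ C ε → C ε ≤ K * σ ε ^ 2 * Real.log (1 / ε)) := by
  refine ⟨fun σ R Cv _ hR _ h hC => le_of_fixedPoint hR h hC, fun σ C _ _ hC => ?_⟩
  -- For `ε < exp (-1)` one has `1 ≤ log (1/ε)`, hence `9 + 8 log (1/ε) ≤ 17 log (1/ε)`.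
  refine ⟨3 / (8 * π ^ 2) * 17, by positivity, Real.exp (-1), ⟨Real.exp_pos _, by simp⟩, ?_⟩
  rintro ε ⟨h0, h1⟩ h2
  have hε1 : ε < 1 := h1.trans (by simp)
  have hlog : 1 ≤ Real.log (1 / ε) := by
    have h := (Real.log_lt_iff_lt_exp h0).2 h1
    rw [one_div, Real.log_inv]
    linarith
  have hR : 1 ≤ 1 / ε := (one_le_div h0).2 hε1.le
  calc C ε ≤ 3 / (8 * π ^ 2) * (σ ε ^ 2 * latticeSum 1 (1 / ε)) :=
        le_of_fixedPoint (by linarith) (hC ε ⟨h0, hε1⟩).2 h2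
    _ ≤ 3 / (8 * π ^ 2) * (σ ε ^ 2 * (17 * Real.log (1 / ε))) := by
        gcongr
        linarith [latticeSum_one_le hR]
    _ = 3 / (8 * π ^ 2) * 17 * σ ε ^ 2 * Real.log (1 / ε) := by ring
end

section
/- Let σ : (0,1) → (0,∞) be bounded with lim_{ε→0} σ(ε)²·log(1/ε) = +∞, and for each ε ∈ (0,1) let C_ε > 1 be the unique solution of C_ε = (3/(8π²))·∑_{|k| ≤ 1/ε} σ(ε)²/(C_ε − 1 + |k|²). Then lim_{ε→0} ε²·C_ε = 0. -/
/-!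
Every term of the lattice sum is at most `1 / a`, and a disc of radius `R ≥ 1` contains at most
`(2R + 1)² ≤ 9R²` lattice points, so `latticeSum a R ≤ 9R² / a`. With `σ ≤ M` the equation for
`C ε` then gives `(C ε - 1)² ≤ C ε * (C ε - 1) ≤ (3M / ε)²`, that is `C ε ≤ 1 + 3M / ε`, and hence
`ε² C ε ≤ ε² + 3Mε → 0`.
-/

open Real Filter Set MeasureTheory

/-- The counting bound: at most `(2⌊R⌋ + 1)² ≤ 9R²` terms, each at most `1 / a`. -/
lemma latticeSum_le {a R : ℝ} (ha : 0 < a) (hR : 1 ≤ R) : latticeSum a R ≤ 9 * R ^ 2 / a := by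
  have hR0 : 0 ≤ R := by linarith
  set n : ℤ := ⌊R⌋ with hn
  have hn0 : 0 ≤ n := Int.floor_nonneg.mpr hR0
  have hnR : (n : ℝ) ≤ R := Int.floor_le R
  have habs : ∀ m : ℤ, (m : ℝ) ^ 2 ≤ R ^ 2 → m ∈ Finset.Icc (-n) n := by
    intro m hm
    obtain ⟨h1, h2⟩ := abs_le.mp (abs_le_of_sq_le_sq hm hR0)
    have h3 : m ≤ n := Int.le_floor.mpr h2
    have h4 : -m ≤ n := Int.le_floor.mpr (by push_cast; linarith)
    exact Finset.mem_Icc.mpr ⟨by linarith, h3⟩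
  unfold latticeSum
  rw [tsum_eq_sum (s := Finset.Icc (-n) n ×ˢ Finset.Icc (-n) n)]
  · have hterm : ∀ k ∈ Finset.Icc (-n) n ×ˢ Finset.Icc (-n) n,
        (if (k.1 : ℝ) ^ 2 + (k.2 : ℝ) ^ 2 ≤ R ^ 2 then
          1 / (a + ((k.1 : ℝ) ^ 2 + (k.2 : ℝ) ^ 2)) else 0) ≤ 1 / a := by
      intro k _
      split_ifs
      · apply one_div_le_one_div_of_le ha
        nlinarith [sq_nonneg (k.1 : ℝ), sq_nonneg (k.2 : ℝ)]
      · positivity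
    refine (Finset.sum_le_card_nsmul _ _ _ hterm).trans ?_
    have hcard : ((Finset.Icc (-n) n).card : ℝ) = 2 * n + 1 := by
      rw [Int.card_Icc]
      have h : ((n + 1 - -n).toNat : ℤ) = 2 * n + 1 := by omega
      exact_mod_cast h
    have hn0' : (0 : ℝ) ≤ n := by exact_mod_cast hn0
    rw [Finset.card_product, nsmul_eq_mul, Nat.cast_mul, hcard, mul_one_div]
    have hcount : (2 * (n : ℝ) + 1) * (2 * n + 1) ≤ 9 * R ^ 2 := by nlinarith
    gcongr ?_ / a
  · intro k hk
    rw [if_neg]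
    intro hle
    exact hk (Finset.mem_product.mpr
      ⟨habs _ (by nlinarith [sq_nonneg (k.2 : ℝ)]), habs _ (by nlinarith [sq_nonneg (k.1 : ℝ)])⟩)

/-- Let `σ : (0,1) → (0,∞)` be bounded with `σ(ε)²·log(1/ε) → +∞` as `ε → 0`, and let
`C ε > 1` solve `C ε = (3/(8π²))·∑_{|k| ≤ 1/ε} σ(ε)²/(C ε − 1 + |k|²)`.
Then `ε²·C ε → 0` as `ε → 0`. -/
theorem stmt12 (σ C : ℝ → ℝ)
    (hσpos : ∀ ε ∈ Set.Ioo (0 : ℝ) 1, 0 < σ ε)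
    (hσbdd : ∃ M : ℝ, ∀ ε ∈ Set.Ioo (0 : ℝ) 1, σ ε ≤ M)
    (hlim : Tendsto (fun ε => σ ε ^ 2 * Real.log (1 / ε))
      (nhdsWithin 0 (Set.Ioo 0 1)) atTop)
    (hC : ∀ ε ∈ Set.Ioo (0 : ℝ) 1, 1 < C ε ∧
      C ε = 3 / (8 * π ^ 2) * (σ ε ^ 2 * latticeSum (C ε - 1) (1 / ε))) :
    Tendsto (fun ε => ε ^ 2 * C ε) (nhdsWithin 0 (Set.Ioo 0 1)) (nhds 0) := by
  obtain ⟨M, hM⟩ := hσbdd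
  have hbound : ∀ ε ∈ Set.Ioo (0 : ℝ) 1, ε ^ 2 * C ε ≤ ε ^ 2 + 3 * M * ε := by
    intro ε hε
    obtain ⟨hC1, hCeq⟩ := hC ε hε
    have hσ := hσpos ε hε
    have hσM := hM ε hε
    have hε0 : 0 < ε := hε.1
    have ha : 0 < C ε - 1 := by linarith
    have hM0 : 0 < M := by linarith
    have hL := latticeSum_le ha ((one_le_div hε0).mpr hε.2.le)
    have hc : 3 / (8 * π ^ 2) ≤ 1 := by
      rw [div_le_one (by positivity)]
      nlinarith [Real.pi_gt_three]
    have hCle : C ε ≤ 1 * (M ^ 2 * (9 * (1 / ε) ^ 2 / (C ε - 1))) := by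
      calc C ε = 3 / (8 * π ^ 2) * (σ ε ^ 2 * latticeSum (C ε - 1) (1 / ε)) := hCeq
        _ ≤ 3 / (8 * π ^ 2) * (M ^ 2 * (9 * (1 / ε) ^ 2 / (C ε - 1))) := by
          refine mul_le_mul_of_nonneg_left ?_ (by positivity)
          exact (mul_le_mul_of_nonneg_left hL (by positivity)).trans (by gcongr)
        _ ≤ _ := by gcongr
    have hsq : (ε * (C ε - 1)) ^ 2 ≤ (3 * M) ^ 2 := by
      have h1 : 1 * (M ^ 2 * (9 * (1 / ε) ^ 2 / (C ε - 1))) =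
          (3 * M) ^ 2 / (ε ^ 2 * (C ε - 1)) := by
        field_simp
        ring
      rw [h1, le_div_iff₀ (by positivity)] at hCle
      have h2 : 0 < ε ^ 2 * (C ε - 1) := by positivity
      nlinarith
    have hroot : ε * (C ε - 1) ≤ 3 * M := abs_le_of_sq_le_sq' hsq (by positivity) |>.2
    nlinarith
  have hup : Tendsto (fun ε : ℝ => ε ^ 2 + 3 * M * ε)
      (nhdsWithin 0 (Set.Ioo 0 1)) (nhds 0) := by
    have hcont : Continuous (fun ε : ℝ => ε ^ 2 + 3 * M * ε) := by fun_prop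
    simpa using (hcont.tendsto 0).mono_left nhdsWithin_le_nhds
  refine tendsto_of_tendsto_of_tendsto_of_le_of_le' tendsto_const_nhds hup ?_ ?_
  · filter_upwards [self_mem_nhdsWithin] with ε hε
    have := (hC ε hε).1
    positivity
  · filter_upwards [self_mem_nhdsWithin] with ε hε using hbound ε hε
end
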